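/- Let P be a finite super logic program with least static expansion \overline{P}, and let N_P be the fixed point of the iteration of Λ_P starting from Def. Then N_P consists exactly of those I_def ∈ Def that are the default part of the reduct of some (full) model of \overline{P}. -/

import Mathlib

/-!
Write `T` for the program viewed as a theory and `N` for the fixed point. `LamOp P` is monotone, so
`N` contains every `D ⊆ DefSet At` with `D ⊆ LamOp P D`.

Every theory `CnNot T` is axiomatised by `T` together with formulas built from default atoms only.
Hence its models are determined by their default parts together with satisfaction of `T`
(`CnNot_model_transfer`); in particular a minimal model of a static expansion of the program
reduces to a minimal model of the program.

*Models of `Pbar` lie in `N`.* If `I` is a model of `Pbar`, the formulas `F` with `not F` true in `I`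
form a proper ideal that is closed under `Pbar`-provable equivalence and contains every `F` with
`Pbar ⊨_min ¬F`. Since `At` is finite, each objective valuation `v` has a characteristic formula, and
the default part of `I` is given by the set of those `v` whose characteristic formula is outside
the ideal. Each of these `v` is the objective part of some minimal model of `Pbar`. So the set of
default parts of models of `Pbar` is a post-fixed point of `LamOp P` (`defaultParts_subset_LamOp`).

*`N` consists of default parts of models of `Pbar`.* Build a Kripke structure whose worlds are the
reduced models of `P` with default part in `N`, where a world with default part `d` sees the
minimal models of `P` with default part in `N` whose objective part refutes every conjunction `E`
with `d E`. Reading `not F` as "`F` is false in all visible worlds" makes each world a full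
interpretation, and the fixed point property says that the reduct of a world has the default part
it started from. The formulas true in all worlds form a `CnClosed` set `K`. A static expansion inside
`K` is obtained from the least fixed point of `A ↦ {F | Cn(T ∪ not A) ⊨_min ¬F}`, which is a monotone
operator by the transfer property. As `Pbar` is least, `Pbar ⊆ K`, so all worlds are models of `Pbar`.
-/

/-- Formulas of the modal language `L_not` over the set `At` of objective atoms.
`not F` is the default negation atom for a formula `F` (arbitrary nesting allowed). -/
inductive Fml (At : Type) : Type
  | atom : At → Fml At
  | tru : Fml At
  | fls : Fml At
  | neg : Fml At → Fml At
  | conj : Fml At → Fml At → Fml At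
  | disj : Fml At → Fml At → Fml At
  | impl : Fml At → Fml At → Fml At
  | equiv : Fml At → Fml At → Fml At
  | not : Fml At → Fml At

/-- An interpretation of `L_not`: a truth value for every objective atom and for
every default atom `not F` (the latter treated as new propositional atoms). -/
structure Interp (At : Type) where
  obj : At → Prop
  dflt : Fml At → Prop

/-- Classical satisfaction of a formula by an interpretation. -/
def Interp.sat {At : Type} (I : Interp At) : Fml At → Prop
  | Fml.atom a => I.obj a
  | Fml.tru => True
  | Fml.fls => False
  | Fml.neg F => ¬ Interp.sat I F
  | Fml.conj F G => Interp.sat I F ∧ Interp.sat I G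
  | Fml.disj F G => Interp.sat I F ∨ Interp.sat I G
  | Fml.impl F G => Interp.sat I F → Interp.sat I G
  | Fml.equiv F G => (Interp.sat I F ↔ Interp.sat I G)
  | Fml.not F => I.dflt F

/-- `I` is a model of the theory `T`. -/
def Interp.satTheory {At : Type} (I : Interp At) (T : Set (Fml At)) : Prop :=
  ∀ F ∈ T, I.sat F

/-- A set `S` contains `T`, the axioms (CA) and (DA), and is closed under
classical propositional consequence and the invariance rule (IR). -/
def CnClosed {At : Type} (T S : Set (Fml At)) : Prop :=
  T ⊆ S ∧
  Fml.not Fml.fls ∈ S ∧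
  Fml.neg (Fml.not Fml.tru) ∈ S ∧
  (∀ F G : Fml At,
    Fml.equiv (Fml.not (Fml.disj F G)) (Fml.conj (Fml.not F) (Fml.not G)) ∈ S) ∧
  (∀ F : Fml At, (∀ I : Interp At, I.satTheory S → I.sat F) → F ∈ S) ∧
  (∀ F G : Fml At, Fml.equiv F G ∈ S → Fml.equiv (Fml.not F) (Fml.not G) ∈ S)

/-- `Cn_not(T)`: the smallest set of formulas containing `T`, the axioms (CA), (DA),
closed under propositional consequence and the invariance rule (IR). -/
def CnNot {At : Type} (T : Set (Fml At)) : Set (Fml At) :=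
  ⋂₀ {S | CnClosed T S}

/-- `M` is smaller than `N`: they agree on all default atoms and the objective atoms
true in `M` form a proper subset of those true in `N`. -/
def Smaller {At : Type} (M N : Interp At) : Prop :=
  M.dflt = N.dflt ∧ {a | M.obj a} ⊂ {a | N.obj a}

/-- `M` is a minimal model of `T`. -/
def IsMinModel {At : Type} (T : Set (Fml At)) (M : Interp At) : Prop :=
  M.satTheory T ∧ ∀ N : Interp At, N.satTheory T → ¬ Smaller N M

/-- `T ⊨_min F`: `F` is true in all minimal models of `T`. -/
def MinEntails {At : Type} (T : Set (Fml At)) (F : Fml At) : Prop :=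
  ∀ M : Interp At, IsMinModel T M → M.sat F

/-- `Td` is a static expansion of `T`. -/
def IsStaticExpansion {At : Type} (T Td : Set (Fml At)) : Prop :=
  Td = CnNot (T ∪ {G | ∃ F : Fml At, MinEntails Td (Fml.neg F) ∧ G = Fml.not F})

/-- `Tbar` is the least static expansion of `T`. -/
def IsLeastStaticExpansion {At : Type} (T Tbar : Set (Fml At)) : Prop :=
  IsStaticExpansion T Tbar ∧ ∀ Td : Set (Fml At), IsStaticExpansion T Td → Tbar ⊆ Td

/-- A clause of a super logic program:
`A1 ∨ … ∨ Ak ← B1 ∧ … ∧ Bm ∧ not C1 ∧ … ∧ not Cn`, where the `Ai` (head) and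
`Bi` (posBody) are objective atoms and the `Ci` (negBody) are finite
conjunctions of objective atoms. -/
structure Clause (At : Type) where
  head : List At
  posBody : List At
  negBody : List (List At)

/-- Valuations of the objective atoms (`Obj`). -/
abbrev ObjVal (At : Type) := At → Prop

/-- Valuations of the default atoms `not(p1 ∧ … ∧ pn)`, indexed by the list
`[p1, …, pn]` of atoms of the conjunction. -/
abbrev DefVal (At : Type) := List At → Prop

/-- `Def`: the valuations of the default atoms making `not(true)`
(the empty conjunction case) false. -/
def DefSet (At : Type) : Set (DefVal At) := {d | ¬ d []}

/-- Satisfaction of a clause by a reduced interpretation `I_obj ∪ I_def`. -/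
def satClause {At : Type} (Io : ObjVal At) (Id : DefVal At) (c : Clause At) : Prop :=
  ((∀ b ∈ c.posBody, Io b) ∧ (∀ C ∈ c.negBody, Id C)) → ∃ a ∈ c.head, Io a

/-- `I_obj ∪ I_def` is a model of the super program `P`. -/
def satProg {At : Type} (Io : ObjVal At) (Id : DefVal At) (P : Set (Clause At)) : Prop :=
  ∀ c ∈ P, satClause Io Id c

/-- `I_obj ∪ I_def` is a minimal model of `P`: it is a model and no model with the
same default part has a strictly smaller set of true objective atoms. -/
def IsMinModelProg {At : Type} (P : Set (Clause At)) (Io : ObjVal At) (Id : DefVal At) : Prop :=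
  satProg Io Id P ∧
  ∀ Io' : ObjVal At, satProg Io' Id P → ¬ ({a | Io' a} ⊂ {a | Io a})

/-- `I_def` is given by the set `O` of objective valuations:
`I_def ⊨ not(p1∧…∧pn)` iff every valuation in `O` satisfies `¬(p1∧…∧pn)`. -/
def givenBy {At : Type} (Id : DefVal At) (O : Set (ObjVal At)) : Prop :=
  ∀ E : List At, Id E ↔ ∀ Io ∈ O, ∃ p ∈ E, ¬ Io p

/-- The operator `Φ_P`: objective parts of minimal models of `P` whose default part
belongs to `D`. -/
def PhiOp {At : Type} (P : Set (Clause At)) (D : Set (DefVal At)) : Set (ObjVal At) :=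
  {Io | ∃ Id ∈ D, IsMinModelProg P Io Id}

/-- The operator `Ψ_P`: default valuations given by some nonempty subset of `O`
and extendable to a model of `P`. -/
def PsiOp {At : Type} (P : Set (Clause At)) (O : Set (ObjVal At)) : Set (DefVal At) :=
  {Id | Id ∈ DefSet At ∧
        (∃ O' ⊆ O, O'.Nonempty ∧ givenBy Id O') ∧
        (∃ Io : ObjVal At, satProg Io Id P)}

/-- The operator `Λ_P := Ψ_P ∘ Φ_P`. -/
def LamOp {At : Type} (P : Set (Clause At)) : Set (DefVal At) → Set (DefVal At) :=
  PsiOp P ∘ PhiOp P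

/-- The conjunction `p1 ∧ … ∧ pn` of a list of objective atoms
(the empty conjunction is `true`, a one-element list is just the atom). -/
def conjAtoms {At : Type} : List At → Fml At
  | [] => Fml.tru
  | [p] => Fml.atom p
  | p :: q :: ps => Fml.conj (Fml.atom p) (conjAtoms (q :: ps))

/-- Conjunction of a list of formulas. -/
def conjList {At : Type} : List (Fml At) → Fml At
  | [] => Fml.tru
  | [F] => F
  | F :: G :: Gs => Fml.conj F (conjList (G :: Gs))

/-- Disjunction `p1 ∨ … ∨ pk` of a list of objective atoms (empty = `false`). -/
def disjAtoms {At : Type} : List At → Fml At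
  | [] => Fml.fls
  | [p] => Fml.atom p
  | p :: q :: ps => Fml.disj (Fml.atom p) (disjAtoms (q :: ps))

/-- The default atom `not(p1 ∧ … ∧ pn)`, with `not(true)` (the case `n = 0`)
identified with `false`. -/
def notConj {At : Type} : List At → Fml At
  | [] => Fml.fls
  | p :: ps => Fml.not (conjAtoms (p :: ps))

/-- The formula of `L_not` corresponding to a program clause. -/
def Clause.toFml {At : Type} (c : Clause At) : Fml At :=
  Fml.impl (conjList (c.posBody.map Fml.atom ++ c.negBody.map notConj))
    (disjAtoms c.head)

/-- The default part of the reduct of a full interpretation `I`: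
its restriction to the default atoms `not(p1 ∧ … ∧ pn)`. -/
def reductDef {At : Type} (I : Interp At) : DefVal At :=
  fun E => I.dflt (conjAtoms E)

/-! ### The closure operator -/

lemma CnClosed_CnNot {At : Type} (T : Set (Fml At)) : CnClosed T (CnNot T) := by
  refine ⟨fun F hF S hS => hS.1 hF, fun S hS => hS.2.1, fun S hS => hS.2.2.1,
    fun F G S hS => hS.2.2.2.1 F G, ?_, ?_⟩
  · intro F hF S hS
    exact hS.2.2.2.2.1 F fun I hI => hF I fun G hG => hI G (hG S hS)
  · intro F G h S hS
    exact hS.2.2.2.2.2 F G (h S hS)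

lemma CnNot_subset {At : Type} {T S : Set (Fml At)} (h : CnClosed T S) : CnNot T ⊆ S :=
  fun _ hF => hF S h

/-- Beyond `T` itself, a theory `CnNot T` only constrains default atoms: an interpretation that
satisfies `T` and shares its default part with a model of `CnNot T` is a model of `CnNot T`. -/
lemma CnNot_model_transfer {At : Type} {T : Set (Fml At)} {M N : Interp At}
    (hM : M.satTheory (CnNot T)) (hN : N.satTheory T) (h : N.dflt = M.dflt) :
    N.satTheory (CnNot T) := by
  have hC := CnClosed_CnNot T
  let S : Set (Fml At) := {F | ∀ I : Interp At, I.satTheory T →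
    (∃ M : Interp At, M.satTheory (CnNot T) ∧ I.dflt = M.dflt) → I.sat F}
  have hS : CnClosed T S := by
    refine ⟨fun F hF I hI _ => hI F hF, ?_, ?_, ?_, ?_, ?_⟩
    · rintro I - ⟨M, hM, e⟩
      simpa [Interp.sat, e] using hM _ hC.2.1
    · rintro I - ⟨M, hM, e⟩
      simpa [Interp.sat, e] using hM _ hC.2.2.1
    · rintro F G I - ⟨M, hM, e⟩
      simpa [Interp.sat, e] using hM _ (hC.2.2.2.1 F G)
    · intro F hF I hI hM
      exact hF I fun G hG => hG I hI hM
    · rintro F G hFG I - ⟨M, hM, e⟩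
      have h1 : Fml.equiv F G ∈ CnNot T :=
        hC.2.2.2.2.1 _ fun J hJ => hFG J (fun H hH => hJ H (hC.1 hH)) ⟨J, hJ, rfl⟩
      simpa [Interp.sat, e] using hM _ (hC.2.2.2.2.2 F G h1)
  intro F hF
  exact CnNot_subset hS hF N hN ⟨M, hM, h⟩

/-! ### Programs as theories -/

lemma sat_conjAtoms {At : Type} (I : Interp At) (E : List At) :
    I.sat (conjAtoms E) ↔ ∀ p ∈ E, I.obj p := by
  fun_induction conjAtoms E <;> simp_all [Interp.sat]

lemma sat_conjList {At : Type} (I : Interp At) (L : List (Fml At)) :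
    I.sat (conjList L) ↔ ∀ F ∈ L, I.sat F := by
  fun_induction conjList L <;> simp_all [Interp.sat]

lemma sat_disjAtoms {At : Type} (I : Interp At) (E : List At) :
    I.sat (disjAtoms E) ↔ ∃ p ∈ E, I.obj p := by
  fun_induction disjAtoms E <;> simp_all [Interp.sat]

lemma sat_notConj {At : Type} (I : Interp At) (h : ¬ I.dflt Fml.tru) (E : List At) :
    I.sat (notConj E) ↔ reductDef I E := by
  cases E <;> simp_all [notConj, Interp.sat, reductDef, conjAtoms]

lemma sat_toFml {At : Type} (I : Interp At) (h : ¬ I.dflt Fml.tru) (c : Clause At) :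
    I.sat c.toFml ↔ satClause I.obj (reductDef I) c := by
  simp only [Clause.toFml, Interp.sat, sat_conjList, sat_disjAtoms, satClause, List.mem_append,
    List.mem_map, or_imp, forall_and, forall_exists_index, and_imp, forall_apply_eq_imp_iff₂,
    sat_notConj I h]

lemma satTheory_prog {At : Type} (I : Interp At) (h : ¬ I.dflt Fml.tru) (P : Set (Clause At)) :
    I.satTheory (Clause.toFml '' P) ↔ satProg I.obj (reductDef I) P := by
  simp only [Interp.satTheory, Set.forall_mem_image, sat_toFml I h, satProg]

lemma LamOp_mono {At : Type} (P : Set (Clause At)) : Monotone (LamOp P) := by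
  rintro D D' h d ⟨h1, ⟨O, hO, h2⟩, h3⟩
  refine ⟨h1, ⟨O, fun v hv => ?_, h2⟩, h3⟩
  obtain ⟨e, he, hm⟩ := hO hv
  exact ⟨e, h he, hm⟩

/-- The theory whose closure a static expansion must equal: `T` plus `not F` for all `F ∈ A`. -/
def addNot {At : Type} (T A : Set (Fml At)) : Set (Fml At) :=
  T ∪ {G | ∃ F : Fml At, F ∈ A ∧ G = Fml.not F}

lemma addNot_mono {At : Type} (T : Set (Fml At)) {A B : Set (Fml At)} (h : A ⊆ B) :
    addNot T A ⊆ addNot T B :=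
  Set.union_subset_union_right _ fun _ ⟨F, hF, e⟩ => ⟨F, h hF, e⟩

lemma CnNot_mono {At : Type} {T T' : Set (Fml At)} (h : T ⊆ T') : CnNot T ⊆ CnNot T' :=
  CnNot_subset ⟨h.trans (CnClosed_CnNot T').1, (CnClosed_CnNot T').2⟩

/-- The assumptions `not F` are default atoms too, so sharing the default part of a model of
`CnNot (addNot T A)` and satisfying `T` is enough to be a model of it. -/
lemma addNot_model_transfer {At : Type} {T A : Set (Fml At)} {M N : Interp At}
    (hM : M.satTheory (CnNot (addNot T A))) (hN : N.satTheory T) (h : N.dflt = M.dflt) :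
    N.satTheory (CnNot (addNot T A)) := by
  refine CnNot_model_transfer hM ?_ h
  rintro G (hG | ⟨F, hF, rfl⟩)
  · exact hN G hG
  · have := hM _ ((CnClosed_CnNot (addNot T A)).1 (Or.inr ⟨F, hF, rfl⟩))
    simpa [Interp.sat, h] using this

lemma minModel_reduct {At : Type} {P : Set (Clause At)} {A : Set (Fml At)} {M : Interp At}
    (hM : IsMinModel (CnNot (addNot (Clause.toFml '' P) A)) M) :
    IsMinModelProg P M.obj (reductDef M) := by
  have hC := CnClosed_CnNot (addNot (Clause.toFml '' P) A)
  have ht : ¬ M.dflt Fml.tru := hM.1 _ hC.2.2.1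
  refine ⟨(satTheory_prog M ht P).1 fun F hF => hM.1 F (hC.1 (Or.inl hF)), ?_⟩
  intro v hv hlt
  exact hM.2 ⟨v, M.dflt⟩
    (addNot_model_transfer hM.1 ((satTheory_prog ⟨v, M.dflt⟩ ht P).2 hv) rfl) ⟨rfl, hlt⟩

/-! ### Default parts of models form a post-fixed point -/

/-- Disjunction of a list of arbitrary formulas. -/
def bigDisj {At : Type} (L : List (Fml At)) : Fml At := L.foldr Fml.disj Fml.fls

lemma sat_bigDisj {At : Type} (I : Interp At) (L : List (Fml At)) :
    I.sat (bigDisj L) ↔ ∃ F ∈ L, I.sat F := by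
  induction L with
  | nil => simp [bigDisj, Interp.sat]
  | cons F L ih => simpa [bigDisj, Interp.sat] using or_congr_right ih

lemma dflt_bigDisj {At : Type} {T S : Set (Fml At)} (hS : CnClosed T S) {I : Interp At}
    (hI : I.satTheory S) (L : List (Fml At)) :
    I.dflt (bigDisj L) ↔ ∀ F ∈ L, I.dflt F := by
  induction L with
  | nil => simpa [bigDisj, Interp.sat] using hI _ hS.2.1
  | cons F L ih =>
    have := hI _ (hS.2.2.2.1 F (bigDisj L))
    simp only [Interp.sat, ih] at this
    simpa [bigDisj] using this

lemma dflt_congr {At : Type} {T S : Set (Fml At)} (hS : CnClosed T S) {I : Interp At}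
    (hI : I.satTheory S) {F G : Fml At} (h : ∀ J : Interp At, J.sat F ↔ J.sat G) :
    I.dflt F ↔ I.dflt G :=
  hI _ (hS.2.2.2.2.2 F G (hS.2.2.2.2.1 _ fun J _ => h J))

/-- Each valuation of finitely many atoms has a characteristic formula. -/
lemma exists_charFml {At : Type} [Finite At] (v : ObjVal At) :
    ∃ F : Fml At, ∀ I : Interp At, I.sat F ↔ I.obj = v := by
  classical
  have := Fintype.ofFinite At
  refine ⟨Fml.neg (bigDisj ((Finset.univ : Finset At).toList.map fun a =>
    if v a then Fml.neg (Fml.atom a) else Fml.atom a)), fun I => ?_⟩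
  simp only [Interp.sat, sat_bigDisj, List.mem_map, Finset.mem_toList, Finset.mem_univ, true_and,
    exists_exists_eq_and, not_exists]
  rw [funext_iff]
  refine forall_congr' fun a => ?_
  by_cases h : v a <;> simp [h, Interp.sat]

lemma defaultParts_subset_LamOp {At : Type} [Finite At] {P : Set (Clause At)} {Pbar : Set (Fml At)}
    (h : IsStaticExpansion (Clause.toFml '' P) Pbar) :
    {d : DefVal At | ∃ I : Interp At, I.satTheory Pbar ∧ d = reductDef I} ⊆
      LamOp P {d : DefVal At | ∃ I : Interp At, I.satTheory Pbar ∧ d = reductDef I} := by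
  have he : Pbar = CnNot (addNot (Clause.toFml '' P) {F | MinEntails Pbar (Fml.neg F)}) := h
  have hC : CnClosed (addNot (Clause.toFml '' P) {F | MinEntails Pbar (Fml.neg F)}) Pbar := by
    have := CnClosed_CnNot (addNot (Clause.toFml '' P) {F | MinEntails Pbar (Fml.neg F)})
    rwa [← he] at this
  rintro _ ⟨I, hI, rfl⟩
  choose χ hχ using fun v : ObjVal At => exists_charFml v
  have ht : ¬ I.dflt Fml.tru := hI _ hC.2.2.1
  -- A formula is in the ideal of `I` iff all characteristic formulas of its valuations are.
  have key : ∀ E : List At, I.dflt (conjAtoms E) ↔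
      ∀ v : ObjVal At, (∀ p ∈ E, v p) → I.dflt (χ v) := by
    intro E
    have hf : {v : ObjVal At | ∀ p ∈ E, v p}.Finite := Set.toFinite _
    rw [dflt_congr hC hI (G := bigDisj (hf.toFinset.toList.map χ)), dflt_bigDisj hC hI]
    · simp
    · intro J
      simp [sat_bigDisj, sat_conjAtoms, hχ]
  refine ⟨ht, ⟨{v | ¬ I.dflt (χ v)}, ?_, ?_, ?_⟩, I.obj,
    (satTheory_prog I ht P).1 fun F hF => hI F (hC.1 (Or.inl hF))⟩
  · intro v hv
    have hn : ¬ MinEntails Pbar (Fml.neg (χ v)) := fun hm =>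
      hv (hI _ (hC.1 (Or.inr ⟨χ v, hm, rfl⟩)))
    simp only [MinEntails, Interp.sat, hχ, not_forall, not_not] at hn
    obtain ⟨M, hM, rfl⟩ := hn
    refine ⟨reductDef M, ⟨M, hM.1, rfl⟩, ?_⟩
    rw [he] at hM
    exact minModel_reduct hM
  · by_contra hne
    refine ht ((key []).2 fun v _ => ?_)
    by_contra hv
    exact hne ⟨v, hv⟩
  · intro E
    change I.dflt (conjAtoms E) ↔ _
    rw [key]
    refine forall_congr' fun v => ?_
    simp only [Set.mem_ofPred_eq]
    have : (∃ p ∈ E, ¬ v p) ↔ ¬ ∀ p ∈ E, v p := by push Not; rfl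
    rw [this]
    tauto

/-! ### The Kripke structure on a fixed point -/

/-- `Sees P N d v e`: a world with default part `d` sees the world `v ∪ e`, that is, `v ∪ e` is a
minimal model of `P` with `e ∈ N`, and `v` refutes each conjunction `E` for which `not E` holds
in `d`. This is the largest accessibility relation compatible with `d`. -/
def Sees {At : Type} (P : Set (Clause At)) (N : Set (DefVal At)) (d : DefVal At) (v : ObjVal At)
    (e : DefVal At) : Prop :=
  (∀ E : List At, d E → ∃ p ∈ E, ¬ v p) ∧ e ∈ N ∧ IsMinModelProg P v e

/-- Kripke truth of a formula at the world `v ∪ d`: `not F` means that `F` is false in all visible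
worlds. -/
def truth {At : Type} (P : Set (Clause At)) (N : Set (DefVal At)) :
    Fml At → ObjVal At → DefVal At → Prop
  | Fml.atom a, v, _ => v a
  | Fml.tru, _, _ => True
  | Fml.fls, _, _ => False
  | Fml.neg F, v, d => ¬ truth P N F v d
  | Fml.conj F G, v, d => truth P N F v d ∧ truth P N G v d
  | Fml.disj F G, v, d => truth P N F v d ∨ truth P N G v d
  | Fml.impl F G, v, d => truth P N F v d → truth P N G v d
  | Fml.equiv F G, v, d => (truth P N F v d ↔ truth P N G v d)
  | Fml.not F, _, d => ∀ v' e, Sees P N d v' e → ¬ truth P N F v' e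

/-- The full interpretation of `L_not` attached to the world `v ∪ d`. -/
def world {At : Type} (P : Set (Clause At)) (N : Set (DefVal At)) (v : ObjVal At)
    (d : DefVal At) : Interp At :=
  ⟨v, fun F => truth P N (Fml.not F) v d⟩

lemma sat_world {At : Type} (P : Set (Clause At)) (N : Set (DefVal At)) (v : ObjVal At)
    (d : DefVal At) (F : Fml At) : (world P N v d).sat F ↔ truth P N F v d := by
  induction F <;> simp_all [Interp.sat, truth, world]

lemma dflt_world {At : Type} (P : Set (Clause At)) (N : Set (DefVal At)) (v : ObjVal At)
    (d : DefVal At) (F : Fml At) :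
    (world P N v d).dflt F ↔ ∀ v' e, Sees P N d v' e → ¬ (world P N v' e).sat F := by
  simp only [sat_world]
  rfl

/-- On a post-fixed point of `LamOp P`, the reduct of the world `v ∪ d` has default part `d`. -/
lemma reductDef_world {At : Type} {P : Set (Clause At)} {N : Set (DefVal At)}
    (hN : N ⊆ LamOp P N) (v : ObjVal At) {d : DefVal At} (hd : d ∈ N) :
    reductDef (world P N v d) = d := by
  obtain ⟨-, ⟨O, hO, -, hg⟩, -⟩ := hN hd
  funext E
  refine propext ?_
  change (world P N v d).dflt (conjAtoms E) ↔ _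
  rw [dflt_world]
  simp only [sat_conjAtoms]
  constructor
  · intro h
    refine (hg E).2 fun v' hv' => ?_
    obtain ⟨e, he, hm⟩ := hO hv'
    have := h v' e ⟨fun E' hE' => (hg E').1 hE' v' hv', he, hm⟩
    simpa [world] using this
  · rintro h v' e hs hall
    obtain ⟨p, hp, hv⟩ := hs.1 E h
    exact hv (hall p hp)

/-- The formulas true in all worlds. -/
def kripkeTheory {At : Type} (P : Set (Clause At)) (N : Set (DefVal At)) : Set (Fml At) :=
  {F | ∀ v : ObjVal At, ∀ d ∈ N, satProg v d P → (world P N v d).sat F}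

lemma not_dflt_tru_world {At : Type} {P : Set (Clause At)} {N : Set (DefVal At)}
    (hN : N ⊆ LamOp P N) (v : ObjVal At) {d : DefVal At} (hd : d ∈ N) :
    ¬ (world P N v d).dflt Fml.tru := by
  have h := congrFun (reductDef_world hN v hd) []
  have h0 : ¬ d [] := (hN hd).1
  rw [← h] at h0
  exact h0

lemma CnClosed_kripkeTheory {At : Type} {P : Set (Clause At)} {N : Set (DefVal At)}
    (hN : N ⊆ LamOp P N) :
    CnClosed (addNot (Clause.toFml '' P) {F | Fml.not F ∈ kripkeTheory P N})
      (kripkeTheory P N) := by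
  refine ⟨?_, ?_, ?_, ?_, ?_, ?_⟩
  · rintro G (hG | ⟨F, hF, rfl⟩)
    · intro v d hd hv
      refine (satTheory_prog _ (not_dflt_tru_world hN v hd) P).2 ?_ G hG
      rw [reductDef_world hN v hd]
      exact hv
    · exact hF
  · intro v d _ _
    exact (dflt_world P N v d _).2 fun _ _ _ h => h
  · intro v d hd _
    exact not_dflt_tru_world hN v hd
  · intro F G v d _ _
    simp only [Interp.sat, dflt_world]
    grind
  · intro F hF v d hd hv
    exact hF _ fun G hG => hG v d hd hv
  · intro F G hFG v d _ _
    simp only [Interp.sat, dflt_world]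
    refine forall_congr' fun v' => forall_congr' fun e => forall_congr' fun hs => ?_
    exact not_congr (hFG v' e hs.2.1 hs.2.2.1)

/-! ### A static expansion inside the theory of the Kripke structure -/

/-- Enlarging the set of assumed default atoms only removes minimal models. -/
lemma minEntails_mono {At : Type} (T : Set (Fml At)) :
    Monotone fun A : Set (Fml At) =>
      {F : Fml At | MinEntails (CnNot (addNot T A)) (Fml.neg F)} := by
  intro A B hAB F hF M hM
  refine hF M ⟨fun G hG => hM.1 G (CnNot_mono (addNot_mono T hAB) hG), ?_⟩
  intro N hN hlt
  refine hM.2 N (addNot_model_transfer hM.1 (fun G hG => ?_) hlt.1) hlt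
  exact hN G ((CnClosed_CnNot _).1 (Or.inl hG))

lemma exists_staticExpansion_subset {At : Type} {P : Set (Clause At)} {N : Set (DefVal At)}
    (hN : N ⊆ LamOp P N) :
    ∃ Td : Set (Fml At), IsStaticExpansion (Clause.toFml '' P) Td ∧ Td ⊆ kripkeTheory P N := by
  let T : Set (Fml At) := Clause.toFml '' P
  let H : Set (Fml At) →o Set (Fml At) :=
    ⟨fun A => {F : Fml At | MinEntails (CnNot (addNot T A)) (Fml.neg F)}, minEntails_mono T⟩
  have hK := CnClosed_kripkeTheory hN
  have hle : H.lfp ⊆ {F | Fml.not F ∈ kripkeTheory P N} := by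
    refine OrderHom.lfp_le H fun F hF v d _ _ => (dflt_world P N v d F).2 fun v' e hs => ?_
    -- A visible world is a minimal model of the closure, so `F` is false in it.
    refine hF (world P N v' e) ⟨fun G hG => CnNot_subset hK hG v' e hs.2.1 hs.2.2.1, ?_⟩
    rintro ⟨w, f⟩ hM ⟨hf, hlt⟩
    obtain rfl : f = (world P N v' e).dflt := hf
    refine hs.2.2.2 w ?_ hlt
    have h2 := (satTheory_prog ⟨w, (world P N v' e).dflt⟩ (not_dflt_tru_world hN v' hs.2.1) P).1
      fun G hG => hM G ((CnClosed_CnNot _).1 (Or.inl hG))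
    have h3 : reductDef ⟨w, (world P N v' e).dflt⟩ = e := reductDef_world hN v' hs.2.1
    rwa [h3] at h2
  refine ⟨CnNot (addNot T H.lfp), ?_, (CnNot_mono (addNot_mono T hle)).trans (CnNot_subset hK)⟩
  change CnNot (addNot T H.lfp) = CnNot (addNot T (H H.lfp))
  rw [H.map_lfp]

/-- Let `P` be a finite super logic program with least static expansion `Pbar`, and
`N_P = Λ_P^[k](Def)` the fixed point of the iteration of `Λ_P` starting from `Def`.
Then `N_P` consists exactly of those `I_def ∈ Def` that are the default part of the
reduct of some full model of `Pbar`. -/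
theorem fixedPoint_eq_defaultParts {At : Type} [Finite At]
    (P : Set (Clause At)) (hPfin : P.Finite)
    (Pbar : Set (Fml At)) (hbar : IsLeastStaticExpansion (Clause.toFml '' P) Pbar)
    (k : ℕ) (hfix : (LamOp P)^[k + 1] (DefSet At) = (LamOp P)^[k] (DefSet At)) :
    (LamOp P)^[k] (DefSet At) =
      {d : DefVal At | ∃ I : Interp At, I.satTheory Pbar ∧ d = reductDef I} := by
  have hmono := LamOp_mono P
  refine Set.Subset.antisymm ?_ ?_
  · have hN : (LamOp P)^[k] (DefSet At) ⊆ LamOp P ((LamOp P)^[k] (DefSet At)) := by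
      rw [← Function.iterate_succ_apply' (LamOp P), hfix]
    intro d hd
    obtain ⟨Td, hTd, hsub⟩ := exists_staticExpansion_subset hN
    obtain ⟨-, -, v, hv⟩ := hN hd
    exact ⟨world P _ v d, fun F hF => hsub (hbar.2 Td hTd hF) v d hd hv,
      (reductDef_world hN v hd).symm⟩
  · have hD := defaultParts_subset_LamOp hbar.1
    have hDef : {d : DefVal At | ∃ I : Interp At, I.satTheory Pbar ∧ d = reductDef I} ⊆
        DefSet At := fun d hd => (hD hd).1
    clear hfix
    induction k with
    | zero => exact hDef
    | succ k ih =>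
      rw [Function.iterate_succ_apply']
      exact hD.trans (hmono ih)
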